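/- arXiv:1406.0810 — 2 statements merged into one kernel-verified Lean document; each statement's English description precedes it below -/
import Mathlib

section
/- Well-definedness and injectivity of the comparison map between generalized Baer differences: in the setup below, the assignment (u,v) ↦ (f₁(u), f₂(v)) maps H₁ into H₂, sends D₁ into D₂, and hence induces a well-defined R-linear map F : 𝔹₁ → 𝔹₂; moreover F is injective. -/
open Submodule

section

variable {R : Type*} [Ring R]

/-- The fiber product `{(x,y) : q₁ x = q₂ y}` of two linear maps with common target,
as a submodule of the product. -/
abbrev fiberProd {M1 M2 M3 : Type*}
    [AddCommGroup M1] [Module R M1] [AddCommGroup M2] [Module R M2]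
    [AddCommGroup M3] [Module R M3]
    (q1 : M1 →ₗ[R] M3) (q2 : M2 →ₗ[R] M3) : Submodule R (M1 × M2) :=
  LinearMap.ker (q1.comp (LinearMap.fst R M1 M2) - q2.comp (LinearMap.snd R M1 M2))

/-- The "diagonal" image `{(ι₁ a, ι₂ a) : a}` of two linear maps with common source,
as a submodule of the product. -/
abbrev diagIm {C M1 M2 : Type*}
    [AddCommGroup C] [Module R C] [AddCommGroup M1] [Module R M1]
    [AddCommGroup M2] [Module R M2]
    (ι1 : C →ₗ[R] M1) (ι2 : C →ₗ[R] M2) : Submodule R (M1 × M2) :=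
  LinearMap.range (ι1.prod ι2)

/-- The (generalized) Baer difference: the fiber product of `q₁, q₂` modulo the
diagonal image of `ι₁, ι₂`. -/
abbrev baerQuot {C M1 M2 M3 : Type*}
    [AddCommGroup C] [Module R C] [AddCommGroup M1] [Module R M1]
    [AddCommGroup M2] [Module R M2] [AddCommGroup M3] [Module R M3]
    (q1 : M1 →ₗ[R] M3) (q2 : M2 →ₗ[R] M3)
    (ι1 : C →ₗ[R] M1) (ι2 : C →ₗ[R] M2) : Type _ :=
  fiberProd q1 q2 ⧸ Submodule.comap (fiberProd q1 q2).subtype (diagIm ι1 ι2)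

/-
The induced map is injective because `f₁` and `f₂` are: if `(f₁ u, f₂ v)` is the diagonal element
`(f₁ (i₁ a), f₂ (i₂ a))`, then `(u, v) = (i₁ a, i₂ a)`. The image of `H₁` lies in `H₂`
as soon as `f₁` and `f₂` cover a common map `c : C₁ → B₃`, that is `p_j ∘ f_j = c ∘ π_j`; exactness
of the second sequences gives this with `c = 0`.
-/

section

variable {M N : Type*} [AddCommGroup M] [Module R M] [AddCommGroup N] [Module R N]

theorem mapQ_injective_of_comap_le {S : Submodule R M} {T : Submodule R N} {f : M →ₗ[R] N}
    (h : S ≤ T.comap f) (h' : T.comap f ≤ S) : Function.Injective (S.mapQ T f h) := by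
  rw [← LinearMap.ker_eq_bot, ker_mapQ, le_antisymm h' h, mkQ_map_self]

end

section

variable {A C B M1 M2 N1 N2 : Type*}
  [AddCommGroup A] [Module R A] [AddCommGroup C] [Module R C] [AddCommGroup B] [Module R B]
  [AddCommGroup M1] [Module R M1] [AddCommGroup M2] [Module R M2]
  [AddCommGroup N1] [Module R N1] [AddCommGroup N2] [Module R N2]
  {π1 : M1 →ₗ[R] C} {π2 : M2 →ₗ[R] C} {p1 : N1 →ₗ[R] B} {p2 : N2 →ₗ[R] B}
  {f1 : M1 →ₗ[R] N1} {f2 : M2 →ₗ[R] N2} {c : C →ₗ[R] B}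

theorem mem_fiberProd {x : M1 × M2} : x ∈ fiberProd π1 π2 ↔ π1 x.1 = π2 x.2 :=
  sub_eq_zero

theorem prodMap_mem_fiberProd (h1 : p1 ∘ₗ f1 = c ∘ₗ π1) (h2 : p2 ∘ₗ f2 = c ∘ₗ π2)
    {x : M1 × M2} (hx : x ∈ fiberProd π1 π2) : f1.prodMap f2 x ∈ fiberProd p1 p2 :=
  mem_fiberProd.2 <| calc
    p1 (f1 x.1) = c (π1 x.1) := LinearMap.congr_fun h1 x.1
    _ = c (π2 x.2) := congrArg c (mem_fiberProd.1 hx)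
    _ = p2 (f2 x.2) := (LinearMap.congr_fun h2 x.2).symm

theorem diagIm_comp (i1 : A →ₗ[R] M1) (i2 : A →ₗ[R] M2) (f1 : M1 →ₗ[R] N1) (f2 : M2 →ₗ[R] N2) :
    diagIm (f1 ∘ₗ i1) (f2 ∘ₗ i2) = (diagIm i1 i2).map (f1.prodMap f2) :=
  LinearMap.range_comp (i1.prod i2) (f1.prodMap f2)

theorem diagIm_le_comap_prodMap (i1 : A →ₗ[R] M1) (i2 : A →ₗ[R] M2)
    (f1 : M1 →ₗ[R] N1) (f2 : M2 →ₗ[R] N2) :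
    diagIm i1 i2 ≤ (diagIm (f1 ∘ₗ i1) (f2 ∘ₗ i2)).comap (f1.prodMap f2) := by
  rw [diagIm_comp]
  exact le_comap_map _ _

theorem comap_prodMap_diagIm_comp (i1 : A →ₗ[R] M1) (i2 : A →ₗ[R] M2)
    (hf1 : Function.Injective f1) (hf2 : Function.Injective f2) :
    (diagIm (f1 ∘ₗ i1) (f2 ∘ₗ i2)).comap (f1.prodMap f2) = diagIm i1 i2 := by
  rw [diagIm_comp]
  exact comap_map_eq_of_injective (hf1.prodMap hf2) _

/-- The comparison map `[(u, v)] ↦ [(f₁ u, f₂ v)]` of Baer differences, for `f₁` and `f₂` covering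
a common map `c` of the bases. -/
def baerQuot.map (i1 : A →ₗ[R] M1) (i2 : A →ₗ[R] M2)
    (h1 : p1 ∘ₗ f1 = c ∘ₗ π1) (h2 : p2 ∘ₗ f2 = c ∘ₗ π2) :
    baerQuot π1 π2 i1 i2 →ₗ[R] baerQuot p1 p2 (f1 ∘ₗ i1) (f2 ∘ₗ i2) :=
  mapQ _ _ ((f1.prodMap f2).restrict fun _ => prodMap_mem_fiberProd h1 h2)
    fun x hx => diagIm_le_comap_prodMap i1 i2 f1 f2 (x := x.1) hx

theorem baerQuot.map_injective (i1 : A →ₗ[R] M1) (i2 : A →ₗ[R] M2)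
    (h1 : p1 ∘ₗ f1 = c ∘ₗ π1) (h2 : p2 ∘ₗ f2 = c ∘ₗ π2)
    (hf1 : Function.Injective f1) (hf2 : Function.Injective f2) :
    Function.Injective (baerQuot.map i1 i2 h1 h2) :=
  mapQ_injective_of_comap_le _ fun _ hx => (comap_prodMap_diagIm_comp i1 i2 hf1 hf2).le hx

end

theorem baer_comparison_welldefined_injective_general
    {A1 C1 B3 B11 B12 B21 B22 : Type*}
    [AddCommGroup A1] [Module R A1] [AddCommGroup C1] [Module R C1]
    [AddCommGroup B3] [Module R B3] [AddCommGroup B11] [Module R B11]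
    [AddCommGroup B12] [Module R B12] [AddCommGroup B21] [Module R B21]
    [AddCommGroup B22] [Module R B22]
    (i1 : A1 →ₗ[R] B11) (i2 : A1 →ₗ[R] B12)
    {π1 : B11 →ₗ[R] C1} {π2 : B12 →ₗ[R] C1}
    {f1 : B11 →ₗ[R] B21} {f2 : B12 →ₗ[R] B22}
    {p1 : B21 →ₗ[R] B3} {p2 : B22 →ₗ[R] B3} {c : C1 →ₗ[R] B3}
    (h1 : p1 ∘ₗ f1 = c ∘ₗ π1) (h2 : p2 ∘ₗ f2 = c ∘ₗ π2)
    (hf1 : Function.Injective f1) (hf2 : Function.Injective f2) :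
    (∀ x : fiberProd π1 π2, (f1 x.1.1, f2 x.1.2) ∈ fiberProd p1 p2) ∧
    (∀ x : B11 × B12, x ∈ diagIm i1 i2 →
        (f1 x.1, f2 x.2) ∈ diagIm (f1.comp i1) (f2.comp i2)) ∧
    (∃ F : baerQuot π1 π2 i1 i2 →ₗ[R] baerQuot p1 p2 (f1.comp i1) (f2.comp i2),
      Function.Injective F ∧
      ∀ (x : fiberProd π1 π2) (hx : (f1 x.1.1, f2 x.1.2) ∈ fiberProd p1 p2),
        F (Submodule.Quotient.mk x)
          = Submodule.Quotient.mk (⟨(f1 x.1.1, f2 x.1.2), hx⟩ : fiberProd p1 p2)) :=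
  ⟨fun x => prodMap_mem_fiberProd h1 h2 x.2,
    fun _ hx => diagIm_le_comap_prodMap i1 i2 f1 f2 hx,
    baerQuot.map i1 i2 h1 h2, baerQuot.map_injective i1 i2 h1 h2 hf1 hf2, fun _ _ => rfl⟩

/-- Well-definedness and injectivity of the comparison map between generalized Baer
differences: `(u,v) ↦ (f₁ u, f₂ v)` maps `H₁` into `H₂`, sends `D₁` into `D₂`, and
induces a well-defined injective `R`-linear map `F : 𝔹₁ → 𝔹₂`. -/
theorem baer_comparison_welldefined_injective
    {A1 C1 B3 B11 B12 B21 B22 : Type*}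
    [AddCommGroup A1] [Module R A1] [AddCommGroup C1] [Module R C1]
    [AddCommGroup B3] [Module R B3] [AddCommGroup B11] [Module R B11]
    [AddCommGroup B12] [Module R B12] [AddCommGroup B21] [Module R B21]
    [AddCommGroup B22] [Module R B22]
    (i1 : A1 →ₗ[R] B11) (i2 : A1 →ₗ[R] B12)
    (π1 : B11 →ₗ[R] C1) (π2 : B12 →ₗ[R] C1)
    (f1 : B11 →ₗ[R] B21) (f2 : B12 →ₗ[R] B22)
    (p1 : B21 →ₗ[R] B3) (p2 : B22 →ₗ[R] B3)
    (hi1 : Function.Injective i1) (hi2 : Function.Injective i2)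
    (hπ1 : Function.Surjective π1) (hπ2 : Function.Surjective π2)
    (hext1 : LinearMap.ker π1 = LinearMap.range i1)
    (hext2 : LinearMap.ker π2 = LinearMap.range i2)
    (hf1 : Function.Injective f1) (hf2 : Function.Injective f2)
    (hp1 : Function.Surjective p1) (hp2 : Function.Surjective p2)
    (hexb1 : LinearMap.ker p1 = LinearMap.range f1)
    (hexb2 : LinearMap.ker p2 = LinearMap.range f2) :
    (∀ x : fiberProd π1 π2, (f1 x.1.1, f2 x.1.2) ∈ fiberProd p1 p2) ∧
    (∀ x : B11 × B12, x ∈ diagIm i1 i2 →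
        (f1 x.1, f2 x.2) ∈ diagIm (f1.comp i1) (f2.comp i2)) ∧
    (∃ F : baerQuot π1 π2 i1 i2 →ₗ[R] baerQuot p1 p2 (f1.comp i1) (f2.comp i2),
      Function.Injective F ∧
      ∀ (x : fiberProd π1 π2) (hx : (f1 x.1.1, f2 x.1.2) ∈ fiberProd p1 p2),
        F (Submodule.Quotient.mk x)
          = Submodule.Quotient.mk (⟨(f1 x.1.1, f2 x.1.2), hx⟩ : fiberProd p1 p2)) :=
  baer_comparison_welldefined_injective_general i1 i2 (c := 0)
    (LinearMap.range_le_ker_iff.1 hexb1.ge) (LinearMap.range_le_ker_iff.1 hexb2.ge) hf1 hf2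

end
end

section
/- Rabi's exactness lemma for the generalized Baer difference: in the setup below, let 𝔽 = 𝔹₂ / F(𝔹₁), where F : 𝔹₁ → 𝔹₂ is the injective map induced by (u,v) ↦ (f₁(u), f₂(v)). Then: (i) the assignment (x,y) ↦ p₁(x) on H₂ descends to a well-defined R-linear map p̄ : 𝔽 → B₃, and p̄ is surjective; (ii) there is a unique R-linear map φ : C₁ → 𝔽 such that φ(π₁(u) − π₂(v)) equals the class of (f₁(u), f₂(v)) in 𝔽 for all u ∈ B₁¹ and v ∈ B₁²; (iii) φ is injective and its image equals the kernel of p̄. In other words, the sequence 0 → C₁ →(φ) 𝔽 →(p̄) B₃ → 0 is a short exact sequence of R-modules. -/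
/-! Since `D₂ = (f₁ × f₂)(D₁)` and `D₁ ⊆ H₁`, dividing `H₂` first by `D₂` and then by `F(𝔹₁)`
amounts to dividing it by the image of `H₁`. Now `H₁` is the kernel of the surjection
`B₁¹ × B₁² → C₁`, `(u, v) ↦ π₁ u - π₂ v`, so `0 → C₁ → 𝔽 → B₃ → 0` is the pushout along this
surjection of the exact sequence `0 → B₁¹ × B₁² → H₂ → B₃ → 0`. -/

open Submodule

section

variable {R : Type*} [Ring R]

/-- The image `F(𝔹₁) ⊆ 𝔹₂` of the comparison map `F : 𝔹₁ → 𝔹₂`,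
`[(u,v)] ↦ [(f₁ u, f₂ v)]`, as a submodule of `𝔹₂ = baerQuot p1 p2 (f1 ∘ i1) (f2 ∘ i2)`. -/
abbrev imComparison {A1 C1 B3 B11 B12 B21 B22 : Type*}
    [AddCommGroup A1] [Module R A1] [AddCommGroup C1] [Module R C1]
    [AddCommGroup B3] [Module R B3] [AddCommGroup B11] [Module R B11]
    [AddCommGroup B12] [Module R B12] [AddCommGroup B21] [Module R B21]
    [AddCommGroup B22] [Module R B22]
    (i1 : A1 →ₗ[R] B11) (i2 : A1 →ₗ[R] B12)
    (π1 : B11 →ₗ[R] C1) (π2 : B12 →ₗ[R] C1)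
    (f1 : B11 →ₗ[R] B21) (f2 : B12 →ₗ[R] B22)
    (p1 : B21 →ₗ[R] B3) (p2 : B22 →ₗ[R] B3) :
    Submodule R (baerQuot p1 p2 (f1.comp i1) (f2.comp i2)) :=
  Submodule.map
    (Submodule.comap (fiberProd p1 p2).subtype (diagIm (f1.comp i1) (f2.comp i2))).mkQ
    (Submodule.comap (fiberProd p1 p2).subtype
      (Submodule.map (f1.prodMap f2) (fiberProd π1 π2)))

/-- `𝔽 = 𝔹₂ / F(𝔹₁)`, the quotient of the generalized Baer difference `𝔹₂` by the
image of the (injective) comparison map `F : 𝔹₁ → 𝔹₂`. -/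
abbrev rabiF {A1 C1 B3 B11 B12 B21 B22 : Type*}
    [AddCommGroup A1] [Module R A1] [AddCommGroup C1] [Module R C1]
    [AddCommGroup B3] [Module R B3] [AddCommGroup B11] [Module R B11]
    [AddCommGroup B12] [Module R B12] [AddCommGroup B21] [Module R B21]
    [AddCommGroup B22] [Module R B22]
    (i1 : A1 →ₗ[R] B11) (i2 : A1 →ₗ[R] B12)
    (π1 : B11 →ₗ[R] C1) (π2 : B12 →ₗ[R] C1)
    (f1 : B11 →ₗ[R] B21) (f2 : B12 →ₗ[R] B22)
    (p1 : B21 →ₗ[R] B3) (p2 : B22 →ₗ[R] B3) : Type _ :=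
  baerQuot p1 p2 (f1.comp i1) (f2.comp i2) ⧸ imComparison i1 i2 π1 π2 f1 f2 p1 p2

section Pushout

variable {N M P C Q : Type*}
  [AddCommGroup N] [Module R N] [AddCommGroup M] [Module R M] [AddCommGroup P] [Module R P]
  [AddCommGroup C] [Module R C] [AddCommGroup Q] [Module R Q]

theorem exists_comp_eq_of_ker_le_ker {g : N →ₗ[R] C} {f : N →ₗ[R] M}
    (hg : Function.Surjective g) (hgf : LinearMap.ker g ≤ LinearMap.ker f) :
    ∃ f' : C →ₗ[R] M, f' ∘ₗ g = f :=
  ⟨(LinearMap.ker g).liftQ f hgf ∘ₗ (g.quotKerEquivOfSurjective hg).symm, by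
    ext; simp [LinearMap.quotKerEquivOfSurjective_symm_apply]⟩

theorem injective_of_ker_comp_le_ker {g : N →ₗ[R] C} {φ : C →ₗ[R] Q}
    (hg : Function.Surjective g) (h : LinearMap.ker (φ ∘ₗ g) ≤ LinearMap.ker g) :
    Function.Injective φ := by
  rw [injective_iff_map_eq_zero]
  intro c hc
  obtain ⟨n, rfl⟩ := hg c
  exact h hc

theorem exact_of_comp_eq_comp_of_surjective {j : N →ₗ[R] M} {p : M →ₗ[R] P} {g : N →ₗ[R] C}
    {q : M →ₗ[R] Q} {φ : C →ₗ[R] Q} {ψ : Q →ₗ[R] P} (hjp : Function.Exact j p)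
    (hg : Function.Surjective g) (hq : Function.Surjective q)
    (hφ : φ ∘ₗ g = q ∘ₗ j) (hψ : ψ ∘ₗ q = p) : Function.Exact φ ψ := by
  rw [LinearMap.exact_iff]
  calc LinearMap.ker ψ
      = map q (LinearMap.ker p) := by
        rw [← hψ, LinearMap.ker_comp, map_comap_eq_of_surjective hq]
    _ = LinearMap.range (φ ∘ₗ g) := by rw [hjp.linearMap_ker_eq, hφ, LinearMap.range_comp]
    _ = LinearMap.range φ := LinearMap.range_comp_of_range_eq_top φ (LinearMap.range_eq_top.2 hg)

/- As `g` is surjective, the pushout of `j` and `g` is `M ⧸ j (ker g)`; `hq` and `hqker` identify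
`Q` with it. -/
theorem exists_shortExact_of_ker_eq_map_ker {j : N →ₗ[R] M} {p : M →ₗ[R] P} {g : N →ₗ[R] C}
    {q : M →ₗ[R] Q} (hjp : Function.Exact j p) (hp : Function.Surjective p)
    (hg : Function.Surjective g) (hq : Function.Surjective q)
    (hqker : LinearMap.ker q = map j (LinearMap.ker g))
    (hjg : LinearMap.ker j ≤ LinearMap.ker g) :
    ∃ (φ : C →ₗ[R] Q) (ψ : Q →ₗ[R] P), φ ∘ₗ g = q ∘ₗ j ∧ ψ ∘ₗ q = p ∧
      Function.Injective φ ∧ Function.Exact φ ψ ∧ Function.Surjective ψ := by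
  have hker : LinearMap.ker (q ∘ₗ j) = LinearMap.ker g := by
    rw [LinearMap.ker_comp, hqker, comap_map_eq, sup_eq_left.2 hjg]
  have hqp : LinearMap.ker q ≤ LinearMap.ker p := by
    rw [hqker, hjp.linearMap_ker_eq]
    exact LinearMap.map_le_range
  obtain ⟨φ, hφ⟩ := exists_comp_eq_of_ker_le_ker hg hker.ge
  obtain ⟨ψ, hψ⟩ := exists_comp_eq_of_ker_le_ker hq hqp
  have hφ_inj : Function.Injective φ := injective_of_ker_comp_le_ker hg (hφ ▸ hker.le)
  have hψ_surj : Function.Surjective ψ := by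
    rw [← hψ, LinearMap.coe_comp] at hp
    exact hp.of_comp
  exact ⟨φ, ψ, hφ, hψ, hφ_inj, exact_of_comp_eq_comp_of_surjective hjp hg hq hφ hψ, hψ_surj⟩

end Pushout

section FiberProduct

variable {A N₁ N₂ M₁ M₂ P : Type*} [AddCommGroup A] [Module R A]
  [AddCommGroup N₁] [Module R N₁] [AddCommGroup N₂] [Module R N₂]
  [AddCommGroup M₁] [Module R M₁] [AddCommGroup M₂] [Module R M₂] [AddCommGroup P] [Module R P]

/-- The difference `(x, y) ↦ q₁ x - q₂ y` of two linear maps with common target; its kernel is,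
definitionally, `fiberProd q₁ q₂`. -/
def diffMap (q₁ : M₁ →ₗ[R] P) (q₂ : M₂ →ₗ[R] P) : M₁ × M₂ →ₗ[R] P :=
  q₁ ∘ₗ LinearMap.fst R M₁ M₂ - q₂ ∘ₗ LinearMap.snd R M₁ M₂

theorem range_diffMap (q₁ : M₁ →ₗ[R] P) (q₂ : M₂ →ₗ[R] P) :
    LinearMap.range (diffMap q₁ q₂) = LinearMap.range q₁ ⊔ LinearMap.range q₂ := by
  have hcoprod : diffMap q₁ q₂ = q₁.coprod (-q₂) := by
    ext <;> simp [diffMap]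
  rw [hcoprod, LinearMap.range_coprod, LinearMap.range_neg]

theorem mem_fiberProd_s7 {q₁ : M₁ →ₗ[R] P} {q₂ : M₂ →ₗ[R] P} {z : M₁ × M₂} :
    z ∈ fiberProd q₁ q₂ ↔ q₁ z.1 = q₂ z.2 := by
  simp [sub_eq_zero]

theorem diagIm_le_fiberProd {ι₁ : A →ₗ[R] M₁} {ι₂ : A →ₗ[R] M₂} {q₁ : M₁ →ₗ[R] P}
    {q₂ : M₂ →ₗ[R] P} (h : q₁ ∘ₗ ι₁ = q₂ ∘ₗ ι₂) : diagIm ι₁ ι₂ ≤ fiberProd q₁ q₂ := by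
  rintro _ ⟨a, rfl⟩
  exact mem_fiberProd_s7.2 (LinearMap.congr_fun h a)

theorem ker_prodMap_le_fiberProd {f₁ : N₁ →ₗ[R] M₁} {f₂ : N₂ →ₗ[R] M₂} {q₁ : N₁ →ₗ[R] P}
    {q₂ : N₂ →ₗ[R] P} (h₁ : LinearMap.ker f₁ ≤ LinearMap.ker q₁)
    (h₂ : LinearMap.ker f₂ ≤ LinearMap.ker q₂) :
    LinearMap.ker (f₁.prodMap f₂) ≤ fiberProd q₁ q₂ := by
  rw [LinearMap.ker_prodMap]
  rintro z ⟨hz₁, hz₂⟩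
  exact mem_fiberProd_s7.2 ((h₁ hz₁).trans (h₂ hz₂).symm)

/-- The structure map `(x, y) ↦ q₁ x = q₂ y` from the fiber product to the common target. -/
def fiberProdProj (q₁ : M₁ →ₗ[R] P) (q₂ : M₂ →ₗ[R] P) : fiberProd q₁ q₂ →ₗ[R] P :=
  q₁ ∘ₗ LinearMap.fst R M₁ M₂ ∘ₗ (fiberProd q₁ q₂).subtype

theorem fiberProdProj_surjective {q₁ : M₁ →ₗ[R] P} {q₂ : M₂ →ₗ[R] P}
    (h₁ : Function.Surjective q₁) (h₂ : Function.Surjective q₂) :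
    Function.Surjective (fiberProdProj q₁ q₂) := by
  intro c
  obtain ⟨x, hx⟩ := h₁ c
  obtain ⟨y, hy⟩ := h₂ c
  exact ⟨⟨(x, y), mem_fiberProd_s7.2 (hx.trans hy.symm)⟩, hx⟩

theorem ker_fiberProdProj (q₁ : M₁ →ₗ[R] P) (q₂ : M₂ →ₗ[R] P) :
    LinearMap.ker (fiberProdProj q₁ q₂) =
      comap (fiberProd q₁ q₂).subtype ((LinearMap.ker q₁).prod (LinearMap.ker q₂)) := by
  ext z
  have hz : q₁ z.1.1 = q₂ z.1.2 := mem_fiberProd_s7.1 z.2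
  exact ⟨fun h ↦ ⟨h, hz.symm.trans h⟩, fun h ↦ h.1⟩

variable {f₁ : N₁ →ₗ[R] M₁} {f₂ : N₂ →ₗ[R] M₂} {q₁ : M₁ →ₗ[R] P} {q₂ : M₂ →ₗ[R] P}

/-- The map `(u, v) ↦ (f₁ u, f₂ v)` into the fiber product of `q₁` and `q₂`, defined when both
composites `q_j ∘ f_j` vanish. -/
def prodMapFiberProd (h₁ : q₁ ∘ₗ f₁ = 0) (h₂ : q₂ ∘ₗ f₂ = 0) : N₁ × N₂ →ₗ[R] fiberProd q₁ q₂ :=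
  (f₁.prodMap f₂).codRestrict (fiberProd q₁ q₂) fun w ↦
    mem_fiberProd_s7.2 ((LinearMap.congr_fun h₁ w.1).trans (LinearMap.congr_fun h₂ w.2).symm)

theorem exact_prodMapFiberProd_fiberProdProj
    (h₁ : Function.Exact f₁ q₁) (h₂ : Function.Exact f₂ q₂) :
    Function.Exact (prodMapFiberProd h₁.linearMap_comp_eq_zero h₂.linearMap_comp_eq_zero)
      (fiberProdProj q₁ q₂) := by
  rw [LinearMap.exact_iff, ker_fiberProdProj, prodMapFiberProd, LinearMap.range_codRestrict,
    LinearMap.range_prodMap, h₁.linearMap_ker_eq, h₂.linearMap_ker_eq]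

end FiberProduct

section RabiQuotient

variable {A1 C1 B3 B11 B12 B21 B22 : Type*}
  [AddCommGroup A1] [Module R A1] [AddCommGroup C1] [Module R C1]
  [AddCommGroup B3] [Module R B3] [AddCommGroup B11] [Module R B11]
  [AddCommGroup B12] [Module R B12] [AddCommGroup B21] [Module R B21]
  [AddCommGroup B22] [Module R B22]
  (i1 : A1 →ₗ[R] B11) (i2 : A1 →ₗ[R] B12) (π1 : B11 →ₗ[R] C1) (π2 : B12 →ₗ[R] C1)
  (f1 : B11 →ₗ[R] B21) (f2 : B12 →ₗ[R] B22) (p1 : B21 →ₗ[R] B3) (p2 : B22 →ₗ[R] B3)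

/-- The quotient map `(x, y) ↦ [[(x, y)]]` from `H₂` through `𝔹₂` to `𝔽`. -/
def rabiF.mk : fiberProd p1 p2 →ₗ[R] rabiF i1 i2 π1 π2 f1 f2 p1 p2 :=
  (imComparison i1 i2 π1 π2 f1 f2 p1 p2).mkQ ∘ₗ
    (comap (fiberProd p1 p2).subtype (diagIm (f1 ∘ₗ i1) (f2 ∘ₗ i2))).mkQ

theorem rabiF.mk_surjective : Function.Surjective (rabiF.mk i1 i2 π1 π2 f1 f2 p1 p2) :=
  (mkQ_surjective _).comp (mkQ_surjective _)

variable {i1 i2 π1 π2}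

theorem diagIm_comp_le_map_fiberProd (h : π1 ∘ₗ i1 = π2 ∘ₗ i2) :
    diagIm (f1 ∘ₗ i1) (f2 ∘ₗ i2) ≤ map (f1.prodMap f2) (fiberProd π1 π2) := by
  have hdiag : diagIm (f1 ∘ₗ i1) (f2 ∘ₗ i2) = map (f1.prodMap f2) (diagIm i1 i2) :=
    LinearMap.range_comp (i1.prod i2) (f1.prodMap f2)
  rw [hdiag]
  exact map_mono (diagIm_le_fiberProd h)

theorem rabiF.ker_mk (h : π1 ∘ₗ i1 = π2 ∘ₗ i2) :
    LinearMap.ker (rabiF.mk i1 i2 π1 π2 f1 f2 p1 p2) =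
      comap (fiberProd p1 p2).subtype (map (f1.prodMap f2) (fiberProd π1 π2)) := by
  rw [rabiF.mk, LinearMap.ker_comp, ker_mkQ, imComparison, comap_map_mkQ, sup_eq_right]
  exact comap_mono (diagIm_comp_le_map_fiberProd f1 f2 h)

end RabiQuotient

theorem rabi_exactness_general
    {A1 C1 B3 B11 B12 B21 B22 : Type*}
    [AddCommGroup A1] [Module R A1] [AddCommGroup C1] [Module R C1]
    [AddCommGroup B3] [Module R B3] [AddCommGroup B11] [Module R B11]
    [AddCommGroup B12] [Module R B12] [AddCommGroup B21] [Module R B21]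
    [AddCommGroup B22] [Module R B22]
    {i1 : A1 →ₗ[R] B11} {i2 : A1 →ₗ[R] B12}
    {π1 : B11 →ₗ[R] C1} {π2 : B12 →ₗ[R] C1}
    {f1 : B11 →ₗ[R] B21} {f2 : B12 →ₗ[R] B22}
    {p1 : B21 →ₗ[R] B3} {p2 : B22 →ₗ[R] B3}
    (hπi : π1 ∘ₗ i1 = π2 ∘ₗ i2)
    (hπ : LinearMap.range π1 ⊔ LinearMap.range π2 = ⊤)
    (hf1 : LinearMap.ker f1 ≤ LinearMap.ker π1) (hf2 : LinearMap.ker f2 ≤ LinearMap.ker π2)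
    (hp1 : Function.Surjective p1) (hp2 : Function.Surjective p2)
    (hfp1 : Function.Exact f1 p1) (hfp2 : Function.Exact f2 p2) :
    ∃ pbar : rabiF i1 i2 π1 π2 f1 f2 p1 p2 →ₗ[R] B3,
      (∀ z : fiberProd p1 p2,
        pbar (Submodule.Quotient.mk (Submodule.Quotient.mk z)) = p1 z.1.1) ∧
      Function.Surjective pbar ∧
      ∃ φ : C1 →ₗ[R] rabiF i1 i2 π1 π2 f1 f2 p1 p2,
        (∀ (u : B11) (v : B12) (h : (f1 u, f2 v) ∈ fiberProd p1 p2),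
          φ (π1 u - π2 v)
            = Submodule.Quotient.mk
                (Submodule.Quotient.mk (⟨(f1 u, f2 v), h⟩ : fiberProd p1 p2))) ∧
        (∀ φ' : C1 →ₗ[R] rabiF i1 i2 π1 π2 f1 f2 p1 p2,
          (∀ (u : B11) (v : B12) (h : (f1 u, f2 v) ∈ fiberProd p1 p2),
            φ' (π1 u - π2 v)
              = Submodule.Quotient.mk
                  (Submodule.Quotient.mk (⟨(f1 u, f2 v), h⟩ : fiberProd p1 p2))) →
          φ' = φ) ∧
        Function.Injective φ ∧
        LinearMap.range φ = LinearMap.ker pbar := by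
  let incl : B11 × B12 →ₗ[R] fiberProd p1 p2 :=
    prodMapFiberProd hfp1.linearMap_comp_eq_zero hfp2.linearMap_comp_eq_zero
  have hdiff : Function.Surjective (diffMap π1 π2) := by
    rw [← LinearMap.range_eq_top, range_diffMap, hπ]
  have hker_mk : LinearMap.ker (rabiF.mk i1 i2 π1 π2 f1 f2 p1 p2) =
      map incl (LinearMap.ker (diffMap π1 π2)) :=
    (rabiF.ker_mk f1 f2 p1 p2 hπi).trans (LinearMap.map_codRestrict _ _ _ _).symm
  have hker_incl : LinearMap.ker incl ≤ LinearMap.ker (diffMap π1 π2) :=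
    (LinearMap.ker_codRestrict _ _ _).trans_le (ker_prodMap_le_fiberProd hf1 hf2)
  obtain ⟨φ, pbar, hφ, hpbar, hφ_inj, hexact, hpbar_surj⟩ :=
    exists_shortExact_of_ker_eq_map_ker (exact_prodMapFiberProd_fiberProdProj hfp1 hfp2)
      (fiberProdProj_surjective hp1 hp2) hdiff (rabiF.mk_surjective i1 i2 π1 π2 f1 f2 p1 p2)
      hker_mk hker_incl
  refine ⟨pbar, LinearMap.congr_fun hpbar, hpbar_surj, φ,
    fun u v _ ↦ LinearMap.congr_fun hφ (u, v), fun φ' hφ' ↦ ?_, hφ_inj,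
    hexact.linearMap_ker_eq.symm⟩
  have hφ'_comp : φ' ∘ₗ diffMap π1 π2 = rabiF.mk i1 i2 π1 π2 f1 f2 p1 p2 ∘ₗ incl :=
    LinearMap.ext fun w ↦ hφ' w.1 w.2 (incl w).2
  exact (LinearMap.cancel_right hdiff).1 (hφ'_comp.trans hφ.symm)

/-- Rabi's exactness lemma: the sequence `0 → C₁ →(φ) 𝔽 →(p̄) B₃ → 0` is a short
exact sequence, where `p̄[[(x,y)]] = p₁ x` and `φ(π₁ u − π₂ v) = [[(f₁ u, f₂ v)]]`. -/
theorem rabi_exactness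
    {A1 C1 B3 B11 B12 B21 B22 : Type*}
    [AddCommGroup A1] [Module R A1] [AddCommGroup C1] [Module R C1]
    [AddCommGroup B3] [Module R B3] [AddCommGroup B11] [Module R B11]
    [AddCommGroup B12] [Module R B12] [AddCommGroup B21] [Module R B21]
    [AddCommGroup B22] [Module R B22]
    (i1 : A1 →ₗ[R] B11) (i2 : A1 →ₗ[R] B12)
    (π1 : B11 →ₗ[R] C1) (π2 : B12 →ₗ[R] C1)
    (f1 : B11 →ₗ[R] B21) (f2 : B12 →ₗ[R] B22)
    (p1 : B21 →ₗ[R] B3) (p2 : B22 →ₗ[R] B3)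
    (hi1 : Function.Injective i1) (hi2 : Function.Injective i2)
    (hπ1 : Function.Surjective π1) (hπ2 : Function.Surjective π2)
    (hext1 : LinearMap.ker π1 = LinearMap.range i1)
    (hext2 : LinearMap.ker π2 = LinearMap.range i2)
    (hf1 : Function.Injective f1) (hf2 : Function.Injective f2)
    (hp1 : Function.Surjective p1) (hp2 : Function.Surjective p2)
    (hexb1 : LinearMap.ker p1 = LinearMap.range f1)
    (hexb2 : LinearMap.ker p2 = LinearMap.range f2) :
    ∃ pbar : rabiF i1 i2 π1 π2 f1 f2 p1 p2 →ₗ[R] B3,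
      (∀ z : fiberProd p1 p2,
        pbar (Submodule.Quotient.mk (Submodule.Quotient.mk z)) = p1 z.1.1) ∧
      Function.Surjective pbar ∧
      ∃ φ : C1 →ₗ[R] rabiF i1 i2 π1 π2 f1 f2 p1 p2,
        (∀ (u : B11) (v : B12) (h : (f1 u, f2 v) ∈ fiberProd p1 p2),
          φ (π1 u - π2 v)
            = Submodule.Quotient.mk
                (Submodule.Quotient.mk (⟨(f1 u, f2 v), h⟩ : fiberProd p1 p2))) ∧
        (∀ φ' : C1 →ₗ[R] rabiF i1 i2 π1 π2 f1 f2 p1 p2,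
          (∀ (u : B11) (v : B12) (h : (f1 u, f2 v) ∈ fiberProd p1 p2),
            φ' (π1 u - π2 v)
              = Submodule.Quotient.mk
                  (Submodule.Quotient.mk (⟨(f1 u, f2 v), h⟩ : fiberProd p1 p2))) →
          φ' = φ) ∧
        Function.Injective φ ∧
        LinearMap.range φ = LinearMap.ker pbar :=
  rabi_exactness_general
    ((LinearMap.range_le_ker_iff.1 hext1.ge).trans (LinearMap.range_le_ker_iff.1 hext2.ge).symm)
    (by rw [LinearMap.range_eq_top.2 hπ1, top_sup_eq])
    (by simp [LinearMap.ker_eq_bot.2 hf1]) (by simp [LinearMap.ker_eq_bot.2 hf2])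
    hp1 hp2 (LinearMap.exact_iff.2 hexb1) (LinearMap.exact_iff.2 hexb2)

end
end
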